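/- arXiv:1206.4586 — 2 statements merged into one kernel-verified Lean document; each statement's English description precedes it below -/
import Mathlib

section
/- Let G_n, n ≥ 2, be the random graphs of Construction 1 built from distributions ν_n, with D_n = |S_n|, and suppose D_n/n converges in distribution to a probability measure ν on [0,1] as n → ∞. Then for every finite simple graph F with vertex set {1,…,m}, t(F, G_n) → t(F,W) in probability as n → ∞, where t(F,W) = ∫_{S^m} ∏_{{i,j}∈E(F)} W(x_i,x_j) dμ_ν(x₁)⋯dμ_ν(x_m) is the homomorphism density of F in the kernel W on (S, μ_ν), μ_ν = ν × λ on S = [0,1]². -/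
open MeasureTheory Filter
open scoped ENNReal

instance (n : ℕ) : MeasurableSpace (Finset (Fin n)) := ⊤

/-- The law of the random neighbourhood set `S_v ⊆ {i : i < v}` of vertex `v` in
Construction 1: `P(S_v = A) = q_v(|A|) / C(v, |A|)` for `A ⊆ {i : i < v}` (`v` has `v`
predecessors since vertices are 0-indexed; `q v` is the indegree distribution of `v`,
supported on `{0,…,v}`). -/
noncomputable def nbhdMeasure (n : ℕ) (q : ℕ → ℕ → ℝ≥0∞) (v : Fin n) :
    Measure (Finset (Fin n)) :=
  ∑ A : Finset (Fin n),
    (if A ⊆ Finset.Iio v then q v A.card / ((v : ℕ).choose A.card : ℝ≥0∞) else 0) •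
      Measure.dirac A

/-- The joint law of the independent random sets `S_v`, `v` a vertex of `G_n`. -/
noncomputable def con1Measure (n : ℕ) (q : ℕ → ℕ → ℝ≥0∞) :
    Measure (Fin n → Finset (Fin n)) :=
  Measure.pi fun v => nbhdMeasure n q v

/-- The graph `G_n` of Construction 1: for `i < k`, the edge `{i,k}` is present
iff `i ∈ S_k`. -/
def graphOf {n : ℕ} (ω : Fin n → Finset (Fin n)) : SimpleGraph (Fin n) where
  Adj i j := (i < j ∧ i ∈ ω j) ∨ (j < i ∧ j ∈ ω i)
  symm := ⟨fun _ _ h => h.symm⟩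
  loopless := ⟨fun i h => by rcases h with ⟨h, -⟩ | ⟨h, -⟩ <;> exact absurd h (lt_irrefl i)⟩

/-- Lebesgue measure on `[0,1]`, as a (probability) measure on `ℝ`. -/
noncomputable def unif01 : Measure ℝ := volume.restrict (Set.Icc (0 : ℝ) 1)

/-- The measure `μ_ν = ν × λ` on `S = [0,1]²`. -/
noncomputable def muNu (ν : Measure ℝ) : Measure (ℝ × ℝ) := ν.prod unif01

/-- The kernel `W` on `S = [0,1]²`:
`W((s₁,t₁),(s₂,t₂)) = s₂` if `t₁ < t₂`, `s₁` if `t₁ > t₂`, and `0` if `t₁ = t₂`. -/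
noncomputable def Wker : ℝ × ℝ → ℝ × ℝ → ℝ := fun x y =>
  if x.2 < y.2 then y.1 else if y.2 < x.2 then x.1 else 0

/-- `∏_{{i,j} ∈ E(F)} W(x_i, x_j)`. -/
noncomputable def edgeProd {m : ℕ} {α : Type*} (F : SimpleGraph (Fin m))
    [DecidableRel F.Adj] (W : α → α → ℝ) (x : Fin m → α) : ℝ :=
  ∏ p ∈ Finset.univ.filter (fun p : Fin m × Fin m => p.1 < p.2 ∧ F.Adj p.1 p.2),
    W (x p.1) (x p.2)

/-- `n(F,G)`: the number of homomorphisms `F → G`. -/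
noncomputable def homCount {m n : ℕ} (F : SimpleGraph (Fin m)) (G : SimpleGraph (Fin n)) : ℕ :=
  Nat.card {φ : Fin m → Fin n // ∀ i j, F.Adj i j → G.Adj (φ i) (φ j)}

/-!
The argument is a second moment computation. For an injective `φ : V(F) → V(G_n)`, the event that
`φ` is a homomorphism asks each `S_{φ i}` to contain a prescribed set, of size the number of
neighbours of `i` that `φ` places before `φ i`. As `S_v` is exchangeable given its size `d`, it
contains `r` prescribed predecessors with probability `C(d, r) / C(v, r)`, which is close to
`(d / v) ^ r`; averaging over `d`, this probability tends to the `r`-th moment of `ν`.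

Variance: maps with disjoint images give independent events, and at most a proportion `m² / n` of
the pairs of maps have images that meet, so `Var t(F, G_n) ≤ m² / n`.

Mean: a uniformly random map `φ` arises by rounding i.i.d. uniform labels `t_i`, which are almost
surely distinct, so that `φ` is eventually injective and ordered like `t`. Hence the mean tends to
the integral over `t` of the product of the moments of `ν` of orders `#{j ~ i : t_j < t_i}`. This is
also what integrating the first coordinates out of `t(F, W)` leaves: an edge contributes the first
coordinate of its endpoint with the larger label.
-/

open ProbabilityTheory
open scoped Topology

section ProductDifferences

lemma norm_prod_sub_prod_le_sum {ι R : Type*} [NormedCommRing R] [NormOneClass R]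
    (s : Finset ι) {f g : ι → R} (hf : ∀ i ∈ s, ‖f i‖ ≤ 1) (hg : ∀ i ∈ s, ‖g i‖ ≤ 1) :
    ‖∏ i ∈ s, f i - ∏ i ∈ s, g i‖ ≤ ∑ i ∈ s, ‖f i - g i‖ := by
  classical
  induction s using Finset.induction_on with
  | empty => simp
  | insert a s ha ih =>
    rw [Finset.forall_mem_insert] at hf hg
    have hprod : ‖∏ i ∈ s, g i‖ ≤ 1 :=
      (s.norm_prod_le g).trans (Finset.prod_le_one (fun _ _ => norm_nonneg _) hg.2)
    rw [Finset.prod_insert ha, Finset.prod_insert ha, Finset.sum_insert ha]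
    calc ‖f a * ∏ i ∈ s, f i - g a * ∏ i ∈ s, g i‖
        = ‖(f a - g a) * ∏ i ∈ s, g i + f a * (∏ i ∈ s, f i - ∏ i ∈ s, g i)‖ := by ring_nf
      _ ≤ ‖f a - g a‖ * ‖∏ i ∈ s, g i‖ + ‖f a‖ * ‖∏ i ∈ s, f i - ∏ i ∈ s, g i‖ :=
          (norm_add_le _ _).trans (add_le_add (norm_mul_le _ _) (norm_mul_le _ _))
      _ ≤ ‖f a - g a‖ * 1 + 1 * ∑ i ∈ s, ‖f i - g i‖ := by
          gcongr
          exacts [hf.1, ih hf.2 hg.2]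
      _ = ‖f a - g a‖ + ∑ i ∈ s, ‖f i - g i‖ := by rw [mul_one, one_mul]

end ProductDifferences

section ChooseRatio

lemma choose_div_choose_eq_prod {K : Type*} [Field K] [CharZero K] (d v r : ℕ) :
    (d.choose r : K) / v.choose r = ∏ j ∈ Finset.range r, ((d - j : ℕ) : K) / (v - j : ℕ) := by
  have hfact : (r.factorial : K) ≠ 0 := Nat.cast_ne_zero.2 r.factorial_ne_zero
  rw [← mul_div_mul_left _ _ hfact, Finset.prod_div_distrib]
  norm_cast
  simp only [← Nat.descFactorial_eq_factorial_mul_choose, Nat.descFactorial_eq_prod_range]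

variable {d v j r : ℕ}

lemma abs_sub_div_sub_sub_div_le (hj : j < v) (hd : d ≤ v) :
    |((d - j : ℕ) : ℝ) / (v - j : ℕ) - d / (v + 1)| ≤ (j + 1) / (v - j : ℕ) := by
  have hv : ((v - j : ℕ) : ℝ) = v - j := Nat.cast_sub hj.le
  have hpos : (0 : ℝ) < (v - j : ℕ) := Nat.cast_pos.2 (Nat.sub_pos_of_lt hj)
  have hle : ((d - j : ℕ) : ℝ) ≤ d := Nat.cast_le.2 (Nat.sub_le d j)
  have hge : (d : ℝ) - j ≤ (d - j : ℕ) := by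
    rw [sub_le_iff_le_add]
    exact_mod_cast le_tsub_add
  have hy1 : (d : ℝ) / (v + 1) ≤ 1 :=
    div_le_one_of_le₀ (by exact_mod_cast hd.trans v.le_succ) (by positivity)
  have hy0 : (0 : ℝ) ≤ d / (v + 1) := by positivity
  have hmul : (d : ℝ) / (v + 1) * (v + 1) = d := div_mul_cancel₀ _ (by positivity)
  have hsplit : ((d - j : ℕ) : ℝ) / (v - j : ℕ) - d / (v + 1)
      = ((d - j : ℕ) - d / (v + 1) * (v - j : ℕ)) / (v - j : ℕ) := by
    rw [sub_div, mul_div_cancel_right₀ _ hpos.ne']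
  rw [hsplit, abs_div, abs_of_pos hpos]
  gcongr
  rw [hv, abs_le]
  constructor <;> nlinarith [j.cast_nonneg (α := ℝ)]

lemma abs_choose_div_choose_sub_div_pow_le (hr : r ≤ v) (hd : d ≤ v) :
    |(d.choose r : ℝ) / v.choose r - ((d : ℝ) / (v + 1)) ^ r|
      ≤ ∑ j ∈ Finset.range r, ((j : ℝ) + 1) / (v - j : ℕ) := by
  have habs : ∀ {a b : ℝ}, 0 ≤ a → a ≤ b → ‖a / b‖ ≤ 1 := fun ha hab => by
    rw [Real.norm_of_nonneg (div_nonneg ha (ha.trans hab))]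
    exact div_le_one_of_le₀ hab (ha.trans hab)
  rw [choose_div_choose_eq_prod, Finset.pow_eq_prod_const, ← Real.norm_eq_abs]
  refine (norm_prod_sub_prod_le_sum _ (fun j _ => ?_) fun j _ => ?_).trans
    (Finset.sum_le_sum fun j hj => ?_)
  · exact habs (Nat.cast_nonneg _) (Nat.cast_le.2 (Nat.sub_le_sub_right hd j))
  · exact habs (Nat.cast_nonneg _) (by exact_mod_cast hd.trans v.le_succ)
  · exact abs_sub_div_sub_sub_div_le ((Finset.mem_range.1 hj).trans_le hr) hd

lemma tendsto_sum_range_div_sub_atTop (r : ℕ) :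
    Tendsto (fun v : ℕ => ∑ j ∈ Finset.range r, ((j : ℝ) + 1) / (v - j : ℕ)) atTop (𝓝 0) := by
  rw [← Finset.sum_const_zero (s := Finset.range r)]
  exact tendsto_finsetSum _ fun j _ =>
    (tendsto_natCast_atTop_atTop.comp (tendsto_sub_atTop_nat j)).const_div_atTop _

end ChooseRatio

lemma sum_Icc_apply_card {α M : Type*} [DecidableEq α] [AddCommMonoid M] {s t : Finset α}
    (hst : s ⊆ t) (f : ℕ → M) :
    ∑ A ∈ Finset.Icc s t, f A.card
      = ∑ e ∈ Finset.range (t.card - s.card + 1), (t.card - s.card).choose e • f (s.card + e) := by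
  have hdisj : ∀ B ∈ (t \ s).powerset, Disjoint s B := fun B hB =>
    Finset.disjoint_of_subset_right (Finset.mem_powerset.1 hB) Finset.disjoint_sdiff
  have hinj : Set.InjOn (s ∪ ·) (t \ s).powerset := fun B hB C hC (h : s ∪ B = s ∪ C) => by
    rw [← Finset.union_sdiff_cancel_left (hdisj B hB), h,
      Finset.union_sdiff_cancel_left (hdisj C hC)]
  rw [Finset.Icc_eq_image_powerset hst, Finset.sum_image hinj, ← Finset.card_sdiff_of_subset hst,
    ← Finset.sum_powerset_apply_card fun e => f (s.card + e)]
  exact Finset.sum_congr rfl fun B hB => by rw [Finset.card_union_of_disjoint (hdisj B hB)]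

/-- The probability, under the law of `S_v`, that `r` given predecessors of `v` all lie in `S_v`:
conditionally on `|S_v| = d` it equals `C(d, r) / C(v, r)`. -/
noncomputable def inclusionProb (q : ℕ → ℕ → ℝ≥0∞) (r v : ℕ) : ℝ≥0∞ :=
  ∑ d ∈ Finset.range (v + 1), q v d * (d.choose r / v.choose r)

section Neighbourhood

variable {n : ℕ} (q : ℕ → ℕ → ℝ≥0∞) (v : Fin n)

instance : DiscreteMeasurableSpace (Finset (Fin n)) := ⟨fun _ => trivial⟩

lemma nbhdMeasure_setOf_superset_eq_sum_Icc (R : Finset (Fin n)) :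
    nbhdMeasure n q v {A | R ⊆ A}
      = ∑ A ∈ Finset.Icc R (Finset.Iio v), q v A.card / (v : ℕ).choose A.card := by
  classical
  rw [← Finset.univ_inter (Finset.Icc R _), ← Finset.sum_ite_mem]
  simp only [nbhdMeasure, Measure.coe_finsetSum, Measure.coe_smul, Finset.sum_apply, Pi.smul_apply,
    Measure.dirac_apply, Finset.mem_Icc]
  refine Finset.sum_congr rfl fun A _ => ?_
  by_cases hv : A ⊆ Finset.Iio v <;> by_cases hR : R ⊆ A <;> simp [hv, hR]

lemma choose_nsmul_div_choose {v r e : ℕ} (h : r + e ≤ v) (x : ℝ≥0∞) :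
    (v - r).choose e • (x / (v.choose (r + e) : ℝ≥0∞))
      = x * ((r + e).choose r / v.choose r) := by
  have hre : (v.choose (r + e) : ℝ≥0∞) ≠ 0 := Nat.cast_ne_zero.2 (Nat.choose_pos h).ne'
  have hr : (v.choose r : ℝ≥0∞) ≠ 0 := Nat.cast_ne_zero.2 (Nat.choose_pos (by omega)).ne'
  have hchoose : (v.choose (r + e) : ℝ≥0∞) * (r + e).choose r = v.choose r * (v - r).choose e := by
    exact_mod_cast (Nat.add_sub_cancel_left (n := r) (m := e)) ▸
      Nat.choose_mul (n := v) (Nat.le_add_right r e)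
  have hdiv : ((v - r).choose e : ℝ≥0∞) / v.choose (r + e) = (r + e).choose r / v.choose r := by
    rw [ENNReal.div_eq_div_iff hr (ENNReal.natCast_ne_top _) hre (ENNReal.natCast_ne_top _),
      hchoose]
  rw [nsmul_eq_mul, ← hdiv, div_eq_mul_inv, mul_left_comm, ← div_eq_mul_inv]

variable {q v}

lemma nbhdMeasure_setOf_superset {R : Finset (Fin n)} (hR : R ⊆ Finset.Iio v) :
    nbhdMeasure n q v {A | R ⊆ A} = inclusionProb q R.card v := by
  have hcard : R.card ≤ v := by simpa using Finset.card_le_card hR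
  have hsmall : ∑ d ∈ Finset.range R.card,
      q v d * ((d.choose R.card : ℝ≥0∞) / (v : ℕ).choose R.card) = 0 :=
    Finset.sum_eq_zero fun d hd => by
      rw [Nat.choose_eq_zero_of_lt (Finset.mem_range.1 hd), Nat.cast_zero, ENNReal.zero_div,
        mul_zero]
  rw [nbhdMeasure_setOf_superset_eq_sum_Icc,
    sum_Icc_apply_card hR fun d => q v d / (v : ℕ).choose d, Fin.card_Iio, inclusionProb,
    show (v : ℕ) + 1 = R.card + (v - R.card + 1) by omega, Finset.sum_range_add _ R.card, hsmall,
    zero_add]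
  exact Finset.sum_congr rfl fun e he =>
    choose_nsmul_div_choose (by have := Finset.mem_range.1 he; omega) _

lemma inclusionProb_zero (q : ℕ → ℕ → ℝ≥0∞) (v : ℕ) :
    inclusionProb q 0 v = ∑ d ∈ Finset.range (v + 1), q v d := by
  simp [inclusionProb]

lemma isProbabilityMeasure_nbhdMeasure (hq : ∑ d ∈ Finset.range (v + 1), q v d = 1) :
    IsProbabilityMeasure (nbhdMeasure n q v) := ⟨by
  simpa [inclusionProb_zero, hq]
    using nbhdMeasure_setOf_superset (q := q) (Finset.Iio v).empty_subset⟩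

end Neighbourhood

section InclusionLimit

variable {q : ℕ → ℕ → ℝ≥0∞}

lemma sum_toReal_eq_one {ι : Type*} {s : Finset ι} {w : ι → ℝ≥0∞} (hw : ∑ i ∈ s, w i = 1) :
    ∑ i ∈ s, (w i).toReal = 1 := by
  rw [← ENNReal.toReal_sum (ENNReal.sum_ne_top.1 (hw ▸ ENNReal.one_ne_top)), hw,
    ENNReal.toReal_one]

lemma toReal_inclusionProb {v : ℕ} (hq : ∑ d ∈ Finset.range (v + 1), q v d = 1) {r : ℕ}
    (hr : r ≤ v) :
    (inclusionProb q r v).toReal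
      = ∑ d ∈ Finset.range (v + 1), (q v d).toReal * ((d.choose r : ℝ) / v.choose r) := by
  have hq_top := ENNReal.sum_ne_top.1 (hq ▸ ENNReal.one_ne_top)
  have hchoose : (v.choose r : ℝ≥0∞) ≠ 0 := Nat.cast_ne_zero.2 (Nat.choose_pos hr).ne'
  rw [inclusionProb, ENNReal.toReal_sum fun d hd => ENNReal.mul_ne_top (hq_top d hd)
    (ENNReal.div_ne_top (ENNReal.natCast_ne_top _) hchoose)]
  simp only [ENNReal.toReal_mul, ENNReal.toReal_div, ENNReal.toReal_natCast]

lemma dist_toReal_inclusionProb_le {v : ℕ} (hq : ∑ d ∈ Finset.range (v + 1), q v d = 1) {r : ℕ}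
    (hr : r ≤ v) :
    dist (∑ d ∈ Finset.range (v + 1), (q v d).toReal * ((d : ℝ) / (v + 1)) ^ r)
        (inclusionProb q r v).toReal
      ≤ ∑ j ∈ Finset.range r, ((j : ℝ) + 1) / (v - j : ℕ) := by
  rw [dist_comm, Real.dist_eq, toReal_inclusionProb hq hr, ← Finset.sum_sub_distrib]
  simp only [← mul_sub]
  calc |∑ d ∈ Finset.range (v + 1), (q v d).toReal *
          ((d.choose r : ℝ) / v.choose r - ((d : ℝ) / (v + 1)) ^ r)|
      ≤ ∑ d ∈ Finset.range (v + 1), (q v d).toReal *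
          |(d.choose r : ℝ) / v.choose r - ((d : ℝ) / (v + 1)) ^ r| :=
        (Finset.abs_sum_le_sum_abs _ _).trans_eq <| by
          simp only [abs_mul, abs_of_nonneg ENNReal.toReal_nonneg]
    _ ≤ ∑ d ∈ Finset.range (v + 1), (q v d).toReal *
          ∑ j ∈ Finset.range r, ((j : ℝ) + 1) / (v - j : ℕ) := by
        gcongr with d hd
        exact abs_choose_div_choose_sub_div_pow_le hr (Nat.lt_succ_iff.1 (Finset.mem_range.1 hd))
    _ = ∑ j ∈ Finset.range r, ((j : ℝ) + 1) / (v - j : ℕ) := by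
        rw [← Finset.sum_mul, sum_toReal_eq_one hq, one_mul]

variable {ν : Measure ℝ}

lemma tendsto_sum_toReal_mul_of_continuousOn (hν : ∀ᵐ x ∂ν, x ∈ Set.Icc (0 : ℝ) 1)
    (hconv : ∀ f : BoundedContinuousFunction ℝ ℝ,
      Tendsto (fun k => ∑ d ∈ Finset.range k, (q (k - 1) d).toReal * f ((d : ℝ) / k))
        atTop (𝓝 (∫ x, f x ∂ν)))
    {g : ℝ → ℝ} (hg : ContinuousOn g (Set.Icc 0 1)) :
    Tendsto (fun k => ∑ d ∈ Finset.range k, (q (k - 1) d).toReal * g ((d : ℝ) / k))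
      atTop (𝓝 (∫ x, g x ∂ν)) := by
  let f : BoundedContinuousFunction ℝ ℝ :=
    .compContinuous (.mkOfCompact ⟨(Set.Icc 0 1).domRestrict g, hg.domRestrict⟩)
      ⟨Set.projIcc (0 : ℝ) 1 zero_le_one, continuous_projIcc⟩
  have hfg : ∀ x ∈ Set.Icc (0 : ℝ) 1, f x = g x := fun x hx =>
    congrArg ((Set.Icc 0 1).domRestrict g) (Set.projIcc_of_mem zero_le_one hx)
  rw [← integral_congr_ae (hν.mono hfg)]
  refine (hconv f).congr fun k => Finset.sum_congr rfl fun d hd => ?_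
  have hdk : (d : ℝ) ≤ k := Nat.cast_le.2 (Finset.mem_range.1 hd).le
  rw [hfg _ ⟨by positivity, div_le_one_of_le₀ hdk k.cast_nonneg⟩]

lemma tendsto_toReal_inclusionProb (hq : ∀ v : ℕ, ∑ d ∈ Finset.range (v + 1), q v d = 1)
    (hν : ∀ᵐ x ∂ν, x ∈ Set.Icc (0 : ℝ) 1)
    (hconv : ∀ f : BoundedContinuousFunction ℝ ℝ,
      Tendsto (fun k => ∑ d ∈ Finset.range k, (q (k - 1) d).toReal * f ((d : ℝ) / k))
        atTop (𝓝 (∫ x, f x ∂ν))) (r : ℕ) :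
    Tendsto (fun v => (inclusionProb q r v).toReal) atTop (𝓝 (∫ x, x ^ r ∂ν)) := by
  have hmoment := (tendsto_sum_toReal_mul_of_continuousOn hν hconv
    (continuous_pow r).continuousOn).comp (tendsto_add_atTop_nat 1)
  refine hmoment.congr_dist (squeeze_zero' (.of_forall fun _ => dist_nonneg) ?_
    (tendsto_sum_range_div_sub_atTop r))
  filter_upwards [eventually_ge_atTop r] with v hv
  simpa using dist_toReal_inclusionProb_le (hq v) hv

end InclusionLimit

section HomomorphismEvents

/-- The event that `φ` is a homomorphism from `F` to the random graph `G_n`. -/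
def homEvent {V : Type*} {n : ℕ} (F : SimpleGraph V) (φ : V → Fin n) :
    Set (Fin n → Finset (Fin n)) :=
  {ω | ∀ i j, F.Adj i j → (graphOf ω).Adj (φ i) (φ j)}

open Classical in
/-- The predecessors of `v` which `S_v` has to contain in order that `φ` be a homomorphism. -/
noncomputable def requiredNbhd {V : Type*} {n : ℕ} (F : SimpleGraph V) (φ : V → Fin n)
    (v : Fin n) : Finset (Fin n) :=
  {w ∈ Finset.Iio v | ∃ i j, F.Adj i j ∧ φ i = v ∧ φ j = w}

/-- The number of neighbours of `i` in `F` that come before `i` when the vertices of `F` are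
ordered by their labels `t`. -/
def backDegree {V α : Type*} [Fintype V] [LinearOrder α] (F : SimpleGraph V) [DecidableRel F.Adj]
    (t : V → α) (i : V) : ℕ :=
  (Finset.univ.filter fun j => F.Adj i j ∧ t j < t i).card

variable {V : Type*} {n : ℕ} {F : SimpleGraph V} {φ : V → Fin n}

lemma mem_requiredNbhd {v w : Fin n} :
    w ∈ requiredNbhd F φ v ↔ w < v ∧ ∃ i j, F.Adj i j ∧ φ i = v ∧ φ j = w := by
  simp [requiredNbhd]

lemma requiredNbhd_subset_Iio (v : Fin n) : requiredNbhd F φ v ⊆ Finset.Iio v :=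
  fun _ hw => Finset.mem_Iio.2 (mem_requiredNbhd.1 hw).1

lemma requiredNbhd_eq_empty {v : Fin n} (hv : v ∉ Set.range φ) : requiredNbhd F φ v = ∅ :=
  Finset.eq_empty_of_forall_notMem fun _ hw =>
    let ⟨_, i, _, _, hi, _⟩ := mem_requiredNbhd.1 hw
    hv ⟨i, hi⟩

lemma card_requiredNbhd_apply [Fintype V] [DecidableRel F.Adj] (hφ : Function.Injective φ) (i : V) :
    (requiredNbhd F φ (φ i)).card = backDegree F φ i := by
  rw [backDegree, ← Finset.card_image_of_injective _ hφ]
  congr 1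
  ext w
  simp only [mem_requiredNbhd, Finset.mem_image, Finset.mem_filter, Finset.mem_univ, true_and]
  constructor
  · rintro ⟨hlt, i', j, hadj, hi, rfl⟩
    exact ⟨j, ⟨hφ hi ▸ hadj, hlt⟩, rfl⟩
  · rintro ⟨j, ⟨hadj, hlt⟩, rfl⟩
    exact ⟨hlt, i, j, hadj, rfl, rfl⟩

lemma homEvent_eq_pi (hφ : ∀ i j, F.Adj i j → φ i ≠ φ j) :
    homEvent F φ = Set.univ.pi fun v => {A | requiredNbhd F φ v ⊆ A} := by
  ext ω
  simp only [homEvent, Set.mem_ofPred_eq, Set.mem_univ_pi]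
  constructor
  · intro h v w hw
    obtain ⟨hlt, i, j, hadj, rfl, rfl⟩ := mem_requiredNbhd.1 hw
    exact (h i j hadj).elim (fun h' => (h'.1.asymm hlt).elim) And.right
  · intro h i j hadj
    have hmem : ∀ {i j}, F.Adj i j → φ j < φ i → φ j ∈ ω (φ i) := fun hadj hlt =>
      h _ (mem_requiredNbhd.2 ⟨hlt, _, _, hadj, rfl, rfl⟩)
    exact (hφ i j hadj).lt_or_gt.imp (fun hlt => ⟨hlt, hmem hadj.symm hlt⟩)
      fun hlt => ⟨hlt, hmem hadj hlt⟩

lemma homEvent_eq_empty (hφ : ¬ ∀ i j, F.Adj i j → φ i ≠ φ j) : homEvent F φ = ∅ :=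
  Set.eq_empty_of_forall_notMem fun _ hω => hφ fun i j hadj => (hω i j hadj).ne

variable {q : ℕ → ℕ → ℝ≥0∞}

lemma isProbabilityMeasure_con1Measure
    (hq : ∀ v : ℕ, ∑ d ∈ Finset.range (v + 1), q v d = 1) (n : ℕ) :
    IsProbabilityMeasure (con1Measure n q) := by
  have := fun v : Fin n => isProbabilityMeasure_nbhdMeasure (hq v)
  unfold con1Measure
  infer_instance

lemma con1Measure_pi_setOf_superset (hq : ∀ v : ℕ, ∑ d ∈ Finset.range (v + 1), q v d = 1)
    {R : Fin n → Finset (Fin n)} (hR : ∀ v, R v ⊆ Finset.Iio v) :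
    con1Measure n q (Set.univ.pi fun v => {A | R v ⊆ A})
      = ∏ v, inclusionProb q (R v).card v := by
  have := fun v : Fin n => isProbabilityMeasure_nbhdMeasure (hq v)
  rw [con1Measure, Measure.pi_pi]
  exact Finset.prod_congr rfl fun v _ => nbhdMeasure_setOf_superset (hR v)

lemma con1Measure_homEvent [Fintype V] [DecidableRel F.Adj]
    (hq : ∀ v : ℕ, ∑ d ∈ Finset.range (v + 1), q v d = 1) (hφ : Function.Injective φ) :
    con1Measure n q (homEvent F φ) = ∏ i, inclusionProb q (backDegree F φ i) (φ i) := by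
  rw [homEvent_eq_pi fun i j hadj => hφ.ne hadj.ne,
    con1Measure_pi_setOf_superset hq requiredNbhd_subset_Iio]
  refine (Fintype.prod_of_injective φ hφ _ _ (fun v hv => ?_) fun i => ?_).symm
  · rw [requiredNbhd_eq_empty hv, Finset.card_empty, inclusionProb_zero, hq]
  · rw [card_requiredNbhd_apply hφ]

lemma indepSet_homEvent (hq : ∀ v : ℕ, ∑ d ∈ Finset.range (v + 1), q v d = 1)
    {V' : Type*} {F' : SimpleGraph V'} {ψ : V' → Fin n}
    (hφψ : ∀ i j, φ i ≠ ψ j) :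
    IndepSet (homEvent F φ) (homEvent F' ψ) (con1Measure n q) := by
  have := isProbabilityMeasure_con1Measure hq n
  refine (indepSet_iff_measure_inter_eq_mul .of_discrete .of_discrete _).2 ?_
  by_cases hφ : ∀ i j, F.Adj i j → φ i ≠ φ j
  swap
  · simp [homEvent_eq_empty hφ]
  by_cases hψ : ∀ i j, F'.Adj i j → ψ i ≠ ψ j
  swap
  · simp [homEvent_eq_empty hψ]
  have hinter : homEvent F φ ∩ homEvent F' ψ
      = Set.univ.pi fun v => {A | requiredNbhd F φ v ∪ requiredNbhd F' ψ v ⊆ A} := by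
    rw [homEvent_eq_pi hφ, homEvent_eq_pi hψ, ← Set.pi_inter_distrib]
    simp only [Finset.union_subset_iff, Set.ofPred_and]
  rw [hinter, con1Measure_pi_setOf_superset hq fun v =>
      Finset.union_subset (requiredNbhd_subset_Iio v) (requiredNbhd_subset_Iio v),
    homEvent_eq_pi hφ, homEvent_eq_pi hψ, con1Measure_pi_setOf_superset hq requiredNbhd_subset_Iio,
    con1Measure_pi_setOf_superset hq requiredNbhd_subset_Iio, ← Finset.prod_mul_distrib]
  refine Finset.prod_congr rfl fun v _ => ?_
  by_cases hv : v ∈ Set.range φ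
  · have hv' : v ∉ Set.range ψ := by
      obtain ⟨i, rfl⟩ := hv
      rintro ⟨j, hj⟩
      exact hφψ i j hj.symm
    rw [requiredNbhd_eq_empty hv', Finset.union_empty, Finset.card_empty, inclusionProb_zero, hq,
      mul_one]
  · rw [requiredNbhd_eq_empty hv, Finset.empty_union, Finset.card_empty, inclusionProb_zero, hq,
      one_mul]

end HomomorphismEvents

section SecondMoment

lemma covariance_indicator_one {Ω : Type*} {mΩ : MeasurableSpace Ω} {μ : Measure Ω}
    [IsProbabilityMeasure μ] {A B : Set Ω} (hA : MeasurableSet A) (hB : MeasurableSet B) :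
    cov[A.indicator 1, B.indicator 1; μ] = μ.real (A ∩ B) - μ.real A * μ.real B := by
  have hmemLp : ∀ {C : Set Ω}, MeasurableSet C → MemLp (C.indicator (1 : Ω → ℝ)) 2 μ :=
    fun hC => (memLp_const (1 : ℝ)).indicator hC
  rw [covariance_eq_sub (hmemLp hA) (hmemLp hB), ← Set.inter_indicator_one,
    integral_indicator_one (hA.inter hB), integral_indicator_one hA, integral_indicator_one hB]

lemma variance_sum_indicator_le_card {Ω ι : Type*} {mΩ : MeasurableSpace Ω} {μ : Measure Ω}
    [IsProbabilityMeasure μ] [Fintype ι] {A : ι → Set Ω} (hA : ∀ i, MeasurableSet (A i))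
    (D : Finset (ι × ι)) (hD : ∀ i j, (i, j) ∉ D → IndepSet (A i) (A j) μ) :
    Var[fun ω => ∑ i, (A i).indicator (1 : Ω → ℝ) ω; μ] ≤ D.card := by
  classical
  have hmemLp : ∀ i, MemLp ((A i).indicator (1 : Ω → ℝ)) 2 μ :=
    fun i => (memLp_const (1 : ℝ)).indicator (hA i)
  rw [variance_fun_sum hmemLp, ← Fintype.sum_prod_type']
  refine (Finset.sum_le_sum fun p _ => ?_).trans_eq
    (by simp : ∑ p : ι × ι, (if p ∈ D then (1 : ℝ) else 0) = D.card)
  rw [covariance_indicator_one (hA p.1) (hA p.2)]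
  split_ifs with hp
  · exact (sub_le_self _ (by positivity)).trans measureReal_le_one
  · rw [measureReal_def, (hD p.1 p.2 hp).measure_inter_eq_mul, ENNReal.toReal_mul, measureReal_def,
      measureReal_def, sub_self]

section Counting

variable {V α : Type*} [Fintype V] [DecidableEq V] [Fintype α] [DecidableEq α]

lemma card_filter_apply_eq_mul_card (i : V) (a : α) :
    (Finset.univ.filter fun φ : V → α => φ i = a).card * Fintype.card α
      = Fintype.card α ^ Fintype.card V := by
  have h := Fintype.card_filter_piFinset_const_eq_of_mem (Finset.univ : Finset α) i
    (Finset.mem_univ a)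
  rw [Fintype.piFinset_univ, Finset.card_univ] at h
  rw [h, ← pow_succ, Nat.sub_add_cancel (Fintype.card_pos_iff.2 ⟨i⟩)]

lemma card_filter_apply_eq_apply_mul_card (i j : V) :
    (Finset.univ.filter fun p : (V → α) × (V → α) => p.1 i = p.2 j).card * Fintype.card α
      = (Fintype.card α ^ Fintype.card V) ^ 2 := by
  rw [Finset.card_filter, Fintype.sum_prod_type_right, Finset.sum_mul]
  simp only [← Finset.card_filter, card_filter_apply_eq_mul_card, Finset.sum_const,
    Finset.card_univ, Fintype.card_fun, smul_eq_mul, sq]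

lemma card_filter_exists_apply_eq_apply_mul_card_le :
    (Finset.univ.filter fun p : (V → α) × (V → α) => ∃ i j, p.1 i = p.2 j).card * Fintype.card α
      ≤ Fintype.card V ^ 2 * (Fintype.card α ^ Fintype.card V) ^ 2 := by
  have hunion : (Finset.univ.filter fun p : (V → α) × (V → α) => ∃ i j, p.1 i = p.2 j)
      = Finset.univ.biUnion fun e : V × V => Finset.univ.filter fun p => p.1 e.1 = p.2 e.2 := by
    ext p
    simp
  calc _ ≤ (∑ e : V × V, (Finset.univ.filter
          fun p : (V → α) × (V → α) => p.1 e.1 = p.2 e.2).card) * Fintype.card α := by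
        rw [hunion]
        exact Nat.mul_le_mul_right _ Finset.card_biUnion_le
    _ = Fintype.card V ^ 2 * (Fintype.card α ^ Fintype.card V) ^ 2 := by
        simp only [Finset.sum_mul, card_filter_apply_eq_apply_mul_card, Finset.sum_const,
          Finset.card_univ, Fintype.card_prod, smul_eq_mul, ← sq]

end Counting

variable {m n : ℕ} (F : SimpleGraph (Fin m))

lemma homCount_graphOf_eq_sum_indicator (ω : Fin n → Finset (Fin n)) :
    (homCount F (graphOf ω) : ℝ) = ∑ φ : Fin m → Fin n, (homEvent F φ).indicator 1 ω := by
  classical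
  rw [homCount, Nat.card_eq_fintype_card, Fintype.card_subtype, Finset.card_filter]
  push_cast
  simp only [Set.indicator_apply, Pi.one_apply]
  exact Finset.sum_congr rfl fun φ _ => if_congr Iff.rfl rfl rfl

variable {q : ℕ → ℕ → ℝ≥0∞}

lemma integral_homCount_graphOf (hq : ∀ v : ℕ, ∑ d ∈ Finset.range (v + 1), q v d = 1) :
    ∫ ω, (homCount F (graphOf ω) : ℝ) ∂con1Measure n q
      = ∑ φ : Fin m → Fin n, (con1Measure n q).real (homEvent F φ) := by
  have := isProbabilityMeasure_con1Measure hq n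
  simp_rw [homCount_graphOf_eq_sum_indicator]
  rw [integral_finsetSum _ fun _ _ => Integrable.of_finite]
  exact Finset.sum_congr rfl fun φ _ => integral_indicator_one .of_discrete

lemma variance_homDensity_le (hq : ∀ v : ℕ, ∑ d ∈ Finset.range (v + 1), q v d = 1)
    (hn : n ≠ 0) :
    Var[fun ω => (homCount F (graphOf ω) : ℝ) / (n : ℝ) ^ m; con1Measure n q] ≤ m ^ 2 / n := by
  have := isProbabilityMeasure_con1Measure hq n
  let D : Finset ((Fin m → Fin n) × (Fin m → Fin n)) := {p | ∃ i j, p.1 i = p.2 j}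
  have hvar : Var[fun ω => (homCount F (graphOf ω) : ℝ); con1Measure n q] ≤ D.card := by
    simp_rw [homCount_graphOf_eq_sum_indicator]
    refine variance_sum_indicator_le_card (fun _ => .of_discrete) D fun φ ψ hφψ => ?_
    exact indepSet_homEvent hq fun i j hij => hφψ (by simpa [D] using ⟨i, j, hij⟩)
  have hcard : (D.card : ℝ) * n ≤ m ^ 2 * ((n : ℝ) ^ m) ^ 2 := by
    have h : D.card * n ≤ m ^ 2 * (n ^ m) ^ 2 := by
      convert card_filter_exists_apply_eq_apply_mul_card_le (V := Fin m) (α := Fin n) <;>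
        exact (Fintype.card_fin _).symm
    exact_mod_cast h
  have hpos : (0 : ℝ) < n := Nat.cast_pos.2 hn.bot_lt
  simp only [div_eq_mul_inv (_ : ℝ) ((n : ℝ) ^ m)]
  rw [variance_mul_const, inv_pow, ← div_eq_mul_inv, div_le_div_iff₀ (by positivity) hpos]
  exact (mul_le_mul_of_nonneg_right hvar hpos.le).trans hcard

end SecondMoment

lemma tendsto_measure_le_abs_sub_of_tendsto_variance {ι : Type*} {l : Filter ι} {Ω : ι → Type*}
    {mΩ : ∀ i, MeasurableSpace (Ω i)} {μ : ∀ i, Measure (Ω i)} [∀ i, IsFiniteMeasure (μ i)]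
    {X : ∀ i, Ω i → ℝ} (hX : ∀ i, MemLp (X i) 2 (μ i)) {c : ℝ}
    (hmean : Tendsto (fun i => ∫ ω, X i ω ∂μ i) l (𝓝 c))
    (hvar : Tendsto (fun i => Var[X i; μ i]) l (𝓝 0)) {ε : ℝ} (hε : 0 < ε) :
    Tendsto (fun i => μ i {ω | ε ≤ |X i ω - c|}) l (𝓝 0) := by
  have hbound : Tendsto (fun i => ENNReal.ofReal (Var[X i; μ i] / (ε / 2) ^ 2)) l (𝓝 0) := by
    simpa using ENNReal.tendsto_ofReal (hvar.div_const ((ε / 2) ^ 2))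
  refine tendsto_of_tendsto_of_tendsto_of_le_of_le' tendsto_const_nhds hbound
    (.of_forall fun _ => zero_le) ?_
  filter_upwards [Metric.tendsto_nhds.1 hmean (ε / 2) (half_pos hε)] with i hi
  refine (measure_mono fun ω hω => ?_).trans (meas_ge_le_variance_div_sq (hX i) (half_pos hε))
  have htri := abs_sub_le (X i ω) (∫ ω, X i ω ∂μ i) c
  rw [Real.dist_eq] at hi
  simp only [Set.mem_ofPred_eq] at hω ⊢
  linarith

section Grid

instance : IsProbabilityMeasure unif01 := ⟨by simp [unif01]⟩

instance : NullSingletonClass unif01 := Measure.restrict.instNullSingletonClass _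

lemma ae_unif01_mem_Ioo : ∀ᵐ t ∂unif01, t ∈ Set.Ioo (0 : ℝ) 1 := by
  rw [unif01, ← restrict_Ioo_eq_restrict_Icc]
  exact ae_restrict_mem measurableSet_Ioo

/-- The index of the cell containing `t` when `[0, 1)` is cut into `n` cells of equal length. It
carries the uniform distribution of `t` to the uniform distribution on `Fin n`; the value is
junk for `t` outside `[0, 1)`. -/
noncomputable def gridIndex (n : ℕ) [NeZero n] (t : ℝ) : Fin n :=
  Fin.ofNat n ⌊n * t⌋₊

variable {n : ℕ} [NeZero n]

lemma val_gridIndex {t : ℝ} (ht : t < 1) : (gridIndex n t : ℕ) = ⌊n * t⌋₊ := by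
  refine Nat.mod_eq_of_lt ((Nat.floor_lt' (NeZero.ne n)).2 ?_)
  exact mul_lt_of_lt_one_right (Nat.cast_pos.2 (NeZero.pos n)) ht

@[fun_prop]
lemma measurable_gridIndex : Measurable (gridIndex n) :=
  (Measurable.of_discrete (f := Fin.ofNat n)).comp (Nat.measurable_floor.comp (by fun_prop))

lemma gridIndex_eq_iff {t : ℝ} (ht : t ∈ Set.Ico (0 : ℝ) 1) {k : Fin n} :
    gridIndex n t = k ↔ t ∈ Set.Ico ((k : ℝ) / n) ((k + 1) / n) := by
  have hn : (0 : ℝ) < n := Nat.cast_pos.2 (NeZero.pos n)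
  rw [Fin.ext_iff, val_gridIndex ht.2, Nat.floor_eq_iff (mul_nonneg hn.le ht.1), Set.mem_Ico,
    div_le_iff₀' hn, lt_div_iff₀' hn]

lemma map_gridIndex_singleton (k : Fin n) :
    unif01.map (gridIndex n) {k} = ENNReal.ofReal (n : ℝ)⁻¹ := by
  have hn : (0 : ℝ) < n := Nat.cast_pos.2 (NeZero.pos n)
  have hk : (k : ℝ) + 1 ≤ n := by exact_mod_cast k.2
  have hcell : gridIndex n ⁻¹' {k} =ᵐ[unif01] Set.Ico ((k : ℝ) / n) ((k + 1) / n) :=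
    ae_unif01_mem_Ioo.mono fun t ht => propext (gridIndex_eq_iff (Set.Ioo_subset_Ico_self ht))
  have hsub : Set.Ico ((k : ℝ) / n) ((k + 1) / n) ⊆ Set.Icc 0 1 := fun t ht =>
    ⟨(by positivity : 0 ≤ (k : ℝ) / n).trans ht.1, ht.2.le.trans (div_le_one_of_le₀ hk hn.le)⟩
  rw [Measure.map_apply measurable_gridIndex (measurableSet_singleton k), measure_congr hcell,
    unif01, Measure.restrict_eq_self _ hsub, Real.volume_Ico, ← sub_div, add_sub_cancel_left,
    one_div]

lemma integral_comp_gridIndex {V : Type*} [Fintype V] [DecidableEq V] (h : (V → Fin n) → ℝ) :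
    ∫ t : V → ℝ, h (fun i => gridIndex n (t i)) ∂Measure.pi (fun _ => unif01)
      = (∑ φ, h φ) / (n : ℝ) ^ Fintype.card V := by
  have : IsProbabilityMeasure (unif01.map (gridIndex n)) :=
    Measure.isProbabilityMeasure_map measurable_gridIndex.aemeasurable
  have hmeas : Measurable fun (t : V → ℝ) (i : V) => gridIndex n (t i) := by fun_prop
  have hmass : ∀ φ : V → Fin n, (Measure.pi fun _ => unif01.map (gridIndex n)).real {φ}
      = ((n : ℝ) ^ Fintype.card V)⁻¹ := fun φ => by
    simp [measureReal_def, Measure.pi_singleton, map_gridIndex_singleton]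
  rw [← integral_map hmeas.aemeasurable Measurable.of_discrete.aestronglyMeasurable,
    Measure.pi_map_pi fun _ => measurable_gridIndex.aemeasurable,
    integral_fintype Integrable.of_finite, Finset.sum_div]
  exact Finset.sum_congr rfl fun φ _ => by rw [hmass, smul_eq_mul, inv_mul_eq_div]

end Grid

section GridLimit

lemma tendsto_natCast_add_one_mul_atTop {t : ℝ} (ht : 0 < t) :
    Tendsto (fun n : ℕ => ((n + 1 : ℕ) : ℝ) * t) atTop atTop :=
  (tendsto_natCast_atTop_atTop.comp (tendsto_add_atTop_nat 1)).atTop_mul_const ht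

lemma tendsto_gridIndex_atTop {t : ℝ} (ht : t ∈ Set.Ioo (0 : ℝ) 1) :
    Tendsto (fun n : ℕ => (gridIndex (n + 1) t : ℕ)) atTop atTop := by
  simp only [val_gridIndex ht.2]
  exact tendsto_nat_floor_atTop.comp (tendsto_natCast_add_one_mul_atTop ht.1)

lemma eventually_gridIndex_lt_gridIndex {s t : ℝ} (hs : 0 ≤ s) (ht : t < 1) (hst : s < t) :
    ∀ᶠ n : ℕ in atTop, gridIndex (n + 1) s < gridIndex (n + 1) t := by
  filter_upwards [(tendsto_natCast_add_one_mul_atTop (sub_pos.2 hst)).eventually_ge_atTop 1]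
    with n hn
  rw [Fin.lt_def, val_gridIndex (hst.trans ht), val_gridIndex ht, ← Nat.add_one_le_iff]
  refine Nat.le_floor ?_
  have hfloor := Nat.floor_le (mul_nonneg (n + 1).cast_nonneg hs : (0 : ℝ) ≤ (n + 1 : ℕ) * s)
  push_cast at hfloor hn ⊢
  linarith

lemma eventually_gridIndex_lt_gridIndex_iff {V : Type*} [Finite V] {t : V → ℝ}
    (ht : ∀ i, t i ∈ Set.Ioo (0 : ℝ) 1) :
    ∀ᶠ n : ℕ in atTop, ∀ i j, gridIndex (n + 1) (t i) < gridIndex (n + 1) (t j) ↔ t i < t j := by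
  refine eventually_all.2 fun i => eventually_all.2 fun j => ?_
  rcases lt_trichotomy (t i) (t j) with hij | hij | hij
  · filter_upwards [eventually_gridIndex_lt_gridIndex (ht i).1.le (ht j).2 hij] with n hn
    exact iff_of_true hn hij
  · simp only [hij, lt_self_iff_false, eventually_true]
  · filter_upwards [eventually_gridIndex_lt_gridIndex (ht j).1.le (ht i).2 hij] with n hn
    exact iff_of_false hn.asymm hij.asymm

end GridLimit

section ProductMeasure

variable {ι X : Type*} [Fintype ι] {mX : MeasurableSpace X} {μ : Measure X} [IsProbabilityMeasure μ]

lemma ae_pi_forall {p : X → Prop} (hp : ∀ᵐ x ∂μ, p x) :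
    ∀ᵐ t ∂Measure.pi fun _ : ι => μ, ∀ i, p (t i) :=
  ae_all_iff.2 fun i => (measurePreserving_eval (fun _ => μ) i).quasiMeasurePreserving.ae hp

lemma measurePreserving_eval_prodMk_eval {i j : ι} (hij : i ≠ j) :
    MeasurePreserving (fun t : ι → X => (t i, t j)) (Measure.pi fun _ => μ) (μ.prod μ) := by
  have hindep := (iIndepFun_pi (μ := fun _ : ι => μ) fun _ => aemeasurable_id).indepFun hij
  have heval := fun k => (measurePreserving_eval (fun _ : ι => μ) k).map_eq
  refine ⟨by fun_prop, ?_⟩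
  simpa only [id, heval] using hindep.map_prod_eq_prod_map_map
    (measurable_pi_apply i).aemeasurable (measurable_pi_apply j).aemeasurable

lemma ae_prod_fst_ne_snd [MeasurableEq X] [NullSingletonClass μ] :
    ∀ᵐ p ∂μ.prod μ, p.1 ≠ p.2 := by
  refine ae_iff.2 ?_
  simp only [not_not]
  refine (Measure.measure_prod_null measurableSet_diagonal).2 (.of_forall fun x => ?_)
  simp [Set.diagonal, Set.preimage]

lemma ae_pi_injective [MeasurableEq X] [NullSingletonClass μ] :
    ∀ᵐ t ∂Measure.pi fun _ : ι => μ, Function.Injective t := by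
  have hpair : ∀ᵐ t ∂Measure.pi fun _ : ι => μ, ∀ i j, i ≠ j → t i ≠ t j :=
    ae_all_iff.2 fun i => ae_all_iff.2 fun j => eventually_imp_distrib_left.2 fun hij =>
      (measurePreserving_eval_prodMk_eval hij).quasiMeasurePreserving.ae ae_prod_fst_ne_snd
  filter_upwards [hpair] with t ht i j hij
  exact not_imp_not.1 (ht i j) hij

end ProductMeasure

section KernelDensity

variable {m : ℕ} (F : SimpleGraph (Fin m)) [DecidableRel F.Adj]

lemma edgeProd_Wker_of_injective (s : Fin m → ℝ) {t : Fin m → ℝ} (ht : Function.Injective t) :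
    edgeProd F Wker (fun i => (s i, t i)) = ∏ i, s i ^ backDegree F t i := by
  let orient : Fin m × Fin m → Fin m × Fin m := fun p => if t p.2 < t p.1 then p else p.swap
  let sort : Fin m × Fin m → Fin m × Fin m := fun p => if p.1 < p.2 then p else p.swap
  have hrhs : ∏ i, s i ^ backDegree F t i
      = ∏ p : Fin m × Fin m with F.Adj p.1 p.2 ∧ t p.2 < t p.1, s p.1 := by
    simp only [backDegree, ← Finset.prod_const, Finset.prod_filter, Fintype.prod_prod_type]
  rw [hrhs, edgeProd]
  refine Finset.prod_nbij' orient sort ?_ ?_ ?_ ?_ ?_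
  all_goals
    rintro ⟨i, j⟩ hp
    simp only [Finset.mem_filter, Finset.mem_univ, true_and] at hp
    have hadj : F.Adj i j := by tauto
    have hij := lt_or_gt_of_ne hadj.ne
    have htij := lt_or_gt_of_ne (ht.ne hadj.ne)
    rcases hij with hij | hij <;> rcases htij with htij | htij <;>
    simp_all [orient, sort, Wker, hadj.symm, not_lt_of_gt]

lemma Wker_mem_Icc {x y : ℝ × ℝ} (hx : x.1 ∈ Set.Icc (0 : ℝ) 1) (hy : y.1 ∈ Set.Icc (0 : ℝ) 1) :
    Wker x y ∈ Set.Icc (0 : ℝ) 1 := by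
  unfold Wker
  split_ifs
  exacts [hy, hx, Set.left_mem_Icc.2 zero_le_one]

lemma measurable_uncurry_Wker : Measurable (Function.uncurry Wker) := by
  unfold Function.uncurry Wker
  exact .ite (measurableSet_lt (by fun_prop) (by fun_prop)) (by fun_prop)
    (.ite (measurableSet_lt (by fun_prop) (by fun_prop)) (by fun_prop) measurable_const)

lemma measurable_edgeProd {α : Type*} [MeasurableSpace α] {W : α → α → ℝ}
    (hW : Measurable (Function.uncurry W)) : Measurable (edgeProd F W) :=
  Finset.measurable_fun_prod _ fun p _ =>
    hW.comp (by fun_prop : Measurable fun x : Fin m → α => (x p.1, x p.2))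

lemma norm_edgeProd_Wker_le_one {x : Fin m → ℝ × ℝ} (hx : ∀ i, (x i).1 ∈ Set.Icc (0 : ℝ) 1) :
    ‖edgeProd F Wker x‖ ≤ 1 := by
  have hW := fun i j => Wker_mem_Icc (hx i) (hx j)
  rw [edgeProd, Real.norm_of_nonneg (Finset.prod_nonneg fun p _ => (hW _ _).1)]
  exact Finset.prod_le_one (fun p _ => (hW _ _).1) fun p _ => (hW _ _).2

lemma integral_edgeProd_Wker {ν : Measure ℝ} [IsProbabilityMeasure ν]
    (hν : ∀ᵐ x ∂ν, x ∈ Set.Icc (0 : ℝ) 1) :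
    ∫ x, edgeProd F Wker x ∂Measure.pi (fun _ => muNu ν)
      = ∫ t, ∏ i, ∫ x, x ^ backDegree F t i ∂ν ∂Measure.pi (fun _ => unif01) := by
  have hmp := measurePreserving_arrowProdEquivProdArrow ℝ ℝ (Fin m) (fun _ => ν) (fun _ => unif01)
  let zip : (Fin m → ℝ) × (Fin m → ℝ) → Fin m → ℝ × ℝ := fun p i => (p.1 i, p.2 i)
  have hint : Integrable (fun p => edgeProd F Wker (zip p))
      ((Measure.pi fun _ => ν).prod (Measure.pi fun _ => unif01)) := by
    refine .of_bound ((measurable_edgeProd F measurable_uncurry_Wker).comp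
      (by fun_prop : Measurable zip)).aestronglyMeasurable 1 ?_
    filter_upwards [Measure.quasiMeasurePreserving_fst.ae (ae_pi_forall hν)] with p hp
    exact norm_edgeProd_Wker_le_one F hp
  calc ∫ x, edgeProd F Wker x ∂Measure.pi (fun _ => muNu ν)
      = ∫ p, edgeProd F Wker (zip p)
          ∂(Measure.pi fun _ => ν).prod (Measure.pi fun _ => unif01) :=
        hmp.integral_comp' fun p => edgeProd F Wker (zip p)
    _ = ∫ t, ∫ s, edgeProd F Wker (zip (s, t)) ∂Measure.pi (fun _ => ν)
          ∂Measure.pi (fun _ => unif01) := integral_prod_symm _ hint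
    _ = ∫ t, ∏ i, ∫ x, x ^ backDegree F t i ∂ν ∂Measure.pi (fun _ => unif01) := by
        refine integral_congr_ae ?_
        filter_upwards [ae_pi_injective] with t ht
        simp only [zip, edgeProd_Wker_of_injective F _ ht]
        exact integral_fintype_prod_eq_prod fun i x => x ^ backDegree F t i

end KernelDensity

section MeanLimit

variable {V : Type*} [Fintype V] (F : SimpleGraph V) [DecidableRel F.Adj]
  {q : ℕ → ℕ → ℝ≥0∞} {a : ℕ → ℝ}

lemma tendsto_con1Measure_homEvent_gridIndex
    (hq : ∀ v : ℕ, ∑ d ∈ Finset.range (v + 1), q v d = 1)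
    (ha : ∀ r, Tendsto (fun v => (inclusionProb q r v).toReal) atTop (𝓝 (a r)))
    {t : V → ℝ} (ht : ∀ i, t i ∈ Set.Ioo (0 : ℝ) 1)
    (hinj : Function.Injective t) :
    Tendsto (fun n : ℕ => (con1Measure (n + 1) q).real
        (homEvent F fun i => gridIndex (n + 1) (t i)))
      atTop (𝓝 (∏ i, a (backDegree F t i))) := by
  have hprod : Tendsto (fun n : ℕ => ∏ i,
      (inclusionProb q (backDegree F t i) (gridIndex (n + 1) (t i))).toReal)
      atTop (𝓝 (∏ i, a (backDegree F t i))) :=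
    tendsto_finsetProd _ fun i _ => (ha _).comp (tendsto_gridIndex_atTop (ht i))
  refine hprod.congr' ?_
  filter_upwards [eventually_gridIndex_lt_gridIndex_iff ht] with n hlt
  have hgrid : Function.Injective fun i => gridIndex (n + 1) (t i) := fun i j hij =>
    hinj (le_antisymm (not_lt.1 ((hlt j i).not.1 hij.not_gt))
      (not_lt.1 ((hlt i j).not.1 hij.not_lt)))
  rw [measureReal_def, con1Measure_homEvent hq hgrid, ENNReal.toReal_prod]
  simp only [backDegree, hlt]

lemma tendsto_average_con1Measure_homEvent [DecidableEq V]
    (hq : ∀ v : ℕ, ∑ d ∈ Finset.range (v + 1), q v d = 1)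
    (ha : ∀ r, Tendsto (fun v => (inclusionProb q r v).toReal) atTop (𝓝 (a r))) :
    Tendsto (fun n : ℕ => (∑ φ : V → Fin (n + 1), (con1Measure (n + 1) q).real (homEvent F φ))
        / ((n + 1 : ℕ) : ℝ) ^ Fintype.card V)
      atTop (𝓝 (∫ t, ∏ i, a (backDegree F t i) ∂Measure.pi (fun _ => unif01))) := by
  have := isProbabilityMeasure_con1Measure hq
  simp only [← integral_comp_gridIndex]
  have hmeas : ∀ n, Measurable fun (t : V → ℝ) i => gridIndex (n + 1) (t i) := by fun_prop
  refine tendsto_integral_of_dominated_convergence (fun _ => 1) (fun n => ?_) (integrable_const _)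
    (fun n => .of_forall fun t => ?_) ?_
  · exact ((Measurable.of_discrete (f := fun φ => (con1Measure (n + 1) q).real
      (homEvent F φ))).comp (hmeas n)).aestronglyMeasurable
  · exact (Real.norm_of_nonneg measureReal_nonneg).trans_le measureReal_le_one
  · filter_upwards [ae_pi_injective, ae_pi_forall ae_unif01_mem_Ioo] with t hinj ht
    exact tendsto_con1Measure_homEvent_gridIndex F hq ha ht hinj

end MeanLimit

/-- Suppose the indegree distributions of Construction 1 satisfy
`D_n/n → ν` in distribution (here `q (n-1)` is the indegree distribution `ν_n` of the `n`-th
vertex, which has `n−1` predecessors). Then for every finite simple graph `F` on `{1,…,m}`,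
`t(F, G_n) → t(F,W)` in probability, where `t(F,G) = n(F,G)/n^m` and
`t(F,W) = ∫_{S^m} ∏_{{i,j}∈E(F)} W(x_i,x_j) dμ_ν^m` on `(S, μ_ν) = ([0,1]², ν × λ)`. -/
theorem stmt12 (ν : Measure ℝ) [IsProbabilityMeasure ν] (hν : ν (Set.Icc 0 1) = 1)
    (q : ℕ → ℕ → ℝ≥0∞)
    (hq1 : ∀ v : ℕ, ∑ d ∈ Finset.range (v + 1), q v d = 1)
    (hq0 : ∀ v d : ℕ, v < d → q v d = 0)
    (hconv : ∀ f : BoundedContinuousFunction ℝ ℝ,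
      Tendsto (fun k => ∑ d ∈ Finset.range k, (q (k - 1) d).toReal * f ((d : ℝ) / k))
        atTop (nhds (∫ x, f x ∂ν)))
    (m : ℕ) (F : SimpleGraph (Fin m)) [DecidableRel F.Adj] :
    ∀ ε > (0 : ℝ), Tendsto
      (fun n => con1Measure n q
        {ω | ε ≤ |(homCount F (graphOf ω) : ℝ) / (n : ℝ) ^ m -
          ∫ x : Fin m → ℝ × ℝ, edgeProd F Wker x ∂(Measure.pi fun _ : Fin m => muNu ν)|})
      atTop (nhds 0) := by
  intro ε hε
  have hν' : ∀ᵐ x ∂ν, x ∈ Set.Icc (0 : ℝ) 1 := (prob_compl_eq_zero_iff measurableSet_Icc).2 hν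
  have := isProbabilityMeasure_con1Measure hq1
  refine (tendsto_add_atTop_iff_nat 1).1 <|
    tendsto_measure_le_abs_sub_of_tendsto_variance (fun _ => .of_discrete) ?mean ?var hε
  case mean =>
    have hmean := tendsto_average_con1Measure_homEvent F hq1
      (tendsto_toReal_inclusionProb hq1 hν' hconv)
    rw [← integral_edgeProd_Wker F hν'] at hmean
    simpa only [integral_div, integral_homCount_graphOf F hq1, Fintype.card_fin] using hmean
  case var =>
    refine squeeze_zero (fun n => variance_nonneg _ _)
      (fun n => variance_homDensity_le F hq1 n.succ_ne_zero) ?_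
    exact (tendsto_const_div_atTop_nhds_zero_nat ((m : ℝ) ^ 2)).comp (tendsto_add_atTop_nat 1)
end

section
/- Let 0 < p < 1, let ν = p δ₁ + (1−p) δ₀ on [0,1], μ_ν = ν × λ on S = [0,1]², and W the kernel on S defined by W((s₁,t₁),(s₂,t₂)) = s₂ if t₁ < t₂, s₁ if t₁ > t₂, 0 if t₁ = t₂. Let G(∞,W) be the random graph on {1,2,3,…} obtained by taking X₁,X₂,… i.i.d. with distribution μ_ν and (V_{ij})_{i<j} i.i.d. Uniform[0,1] independent of the X's, with edge {i,j} present if and only if V_{ij} < W(X_i,X_j). Then almost surely no two distinct vertices i ≠ j of G(∞,W) have equal closed neighbourhoods N̄(i) = N̄(j), where N̄(v) = {v} ∪ {u : u adjacent to v}. -/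
open MeasureTheory ProbabilityTheory Filter
open scoped ENNReal

/-- Index type for the joint family `(X_i)_i, (V_{ij})_{ij}`. -/
def mixType : ℕ ⊕ (ℕ × ℕ) → Type
  | .inl _ => ℝ × ℝ
  | .inr _ => ℝ

instance : ∀ s, MeasurableSpace (mixType s)
  | .inl _ => (inferInstance : MeasurableSpace (ℝ × ℝ))
  | .inr _ => (inferInstance : MeasurableSpace ℝ)

/-- The combined family of random variables `(X_i)_i, (V_{ij})_{ij}`. -/
def mixFam {Ω : Type*} (X : ℕ → Ω → ℝ × ℝ) (V : ℕ × ℕ → Ω → ℝ) :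
    ∀ s : ℕ ⊕ (ℕ × ℕ), Ω → mixType s
  | .inl i => X i
  | .inr q => V q

/-- Adjacency in `G(∞,W)`: for `a < b`, the edge `{a,b}` is present iff
`V_{ab} < W(X_a, X_b)`. -/
def kerAdj {Ω : Type*} (X : ℕ → Ω → ℝ × ℝ) (V : ℕ × ℕ → Ω → ℝ) (ω : Ω) (a b : ℕ) : Prop :=
  (a < b ∧ V (a, b) ω < Wker (X a ω) (X b ω)) ∨ (b < a ∧ V (b, a) ω < Wker (X b ω) (X a ω))

/-!
Write `X i = (s i, t i)`. The vertex with the later time decides: if `t a < t b`, then `a` and `b`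
are adjacent iff `s b = 1`. Hence a vertex `u` with `t a < t u < t b` is adjacent to `a` iff
`s u = 1` and to `b` iff `s b = 1`, so it tells the two closed neighbourhoods apart as soon as
`s u ≠ s b`. The times having an atomless law `τ`, almost surely `τ` charges each interval
`(t a, t b)`; the open set `{s b}ᶜ × (t a, t b)` then has positive measure, and an i.i.d. sample
almost surely visits all open sets of positive measure at once, because the space is second
countable.
-/

open Set TopologicalSpace
open scoped unitInterval

section Atomless

variable {α : Type*} [LinearOrder α] [TopologicalSpace α] [OrderClosedTopology α]
  [SecondCountableTopology α] [MeasurableSpace α]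

theorem ae_measure_Ioo_ne_zero (μ : Measure α) [NullSingletonClass μ] (x : α) :
    ∀ᵐ y ∂μ, x ≤ y → μ (Ioo x y) ≠ 0 := by
  -- A point `y ≥ x` with `μ (Ioo x y) = 0` is `x`, or it is interior to a null interval, or it is
  -- the greatest such point.
  have h_inner : μ {y | x < y ∧ ∃ z, y < z ∧ μ (Ioo x z) = 0} = 0 :=
    measure_null_of_locally_null _ fun _ ⟨hxy, z, hyz, hz⟩ ↦
      ⟨Ioo x z, mem_nhdsWithin_of_mem_nhds (Ioo_mem_nhds hxy hyz), hz⟩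
  have h_greatest : μ {y | IsGreatest {z | μ (Ioo x z) = 0} y} = 0 :=
    Set.Subsingleton.measure_zero (fun _ hy _ hz ↦ hy.unique hz) μ
  filter_upwards [measure_eq_zero_iff_ae_notMem.1 h_inner,
    measure_eq_zero_iff_ae_notMem.1 h_greatest, μ.ae_ne x] with y hy_inner hy_greatest hyx hxy hy
  exact hy_greatest
    ⟨hy, fun z hz ↦ not_lt.1 fun hyz ↦ hy_inner ⟨hxy.lt_of_ne hyx.symm, z, hyz, hz⟩⟩

variable [OpensMeasurableSpace α]

theorem measurable_measure_Ioo (μ : Measure α) [SFinite μ] :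
    Measurable fun z : α × α ↦ μ (Ioo z.1 z.2) := by
  have h : MeasurableSet {w : (α × α) × α | w.1.1 < w.2 ∧ w.2 < w.1.2} :=
    (measurableSet_lt (by fun_prop) (by fun_prop)).inter
      (measurableSet_lt (by fun_prop) (by fun_prop))
  exact measurable_measure_prodMk_left h

theorem ae_measure_Ioo_ne_zero_of_indepFun {Ω : Type*} [MeasurableSpace Ω] {P : Measure Ω}
    [IsFiniteMeasure P] {ν μ : Measure α} [SFinite μ] [NullSingletonClass μ]
    {S T : Ω → α} (hS : HasLaw S ν P) (hT : HasLaw T μ P) (hST : IndepFun S T P) :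
    ∀ᵐ ω ∂P, S ω ≤ T ω → μ (Ioo (S ω) (T ω)) ≠ 0 := by
  have h_meas : Measurable fun z : α × α ↦ z.1 ≤ z.2 → μ (Ioo z.1 z.2) ≠ 0 :=
    (Measurable.le' measurable_fst measurable_snd).imp
      ((measurable_measure_Ioo μ).eq measurable_const).not
  exact ((hST.hasLaw_prod hS hT).ae_iff h_meas).2 <|
    (Measure.ae_prod_iff_ae_ae (measurableSet_setOfPred.2 h_meas)).2 <|
      Eventually.of_forall (ae_measure_Ioo_ne_zero μ)

end Atomless

section Sampling

variable {Ω α : Type*} [MeasurableSpace Ω] [MeasurableSpace α] {P : Measure Ω} {μ : Measure α}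
  {Y : ℕ → Ω → α}

theorem ae_frequently_mem_of_iIndepFun (hmeas : ∀ n, Measurable (Y n))
    (hlaw : ∀ n, P.map (Y n) = μ) (hindep : iIndepFun Y P) {A : Set α} (hA : MeasurableSet A)
    (hμA : μ A ≠ 0) : ∀ᵐ ω ∂P, ∃ᶠ n in atTop, Y n ω ∈ A := by
  have : IsProbabilityMeasure P := hindep.isProbabilityMeasure
  have h_preimage (n : ℕ) : MeasurableSet (Y n ⁻¹' A) := hmeas n hA
  have h_sets : iIndepSet (fun n ↦ Y n ⁻¹' A) P :=
    (iIndepSet_iff_meas_biInter h_preimage).2 fun s ↦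
      hindep.measure_inter_preimage_eq_mul s fun _ _ ↦ hA
  have h_measure (n : ℕ) : P (Y n ⁻¹' A) = μ A := by rw [← Measure.map_apply (hmeas n) hA, hlaw]
  have h_tsum : ∑' n, P (Y n ⁻¹' A) = ∞ := by
    simp only [h_measure, ENNReal.tsum_const_eq_top_of_ne_zero hμA]
  filter_upwards [(mem_ae_iff_prob_eq_one (.measurableSet_limsup h_preimage)).2
    (measure_limsup_eq_one h_preimage h_sets h_tsum)] with ω hω
  exact mem_limsup_iff_frequently_mem.1 hω

theorem ae_forall_isOpen_frequently_mem_of_iIndepFun [TopologicalSpace α]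
    [SecondCountableTopology α] [OpensMeasurableSpace α] (hmeas : ∀ n, Measurable (Y n))
    (hlaw : ∀ n, P.map (Y n) = μ) (hindep : iIndepFun Y P) :
    ∀ᵐ ω ∂P, ∀ U, IsOpen U → μ U ≠ 0 → ∃ᶠ n in atTop, Y n ω ∈ U := by
  have h_basis : ∀ᵐ ω ∂P, ∀ B ∈ countableBasis α, μ B ≠ 0 → ∃ᶠ n in atTop, Y n ω ∈ B :=
    (ae_ball_iff (countable_countableBasis α)).2 fun B hB ↦ ae_all_iff.2 fun hμB ↦
      ae_frequently_mem_of_iIndepFun hmeas hlaw hindep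
        (isOpen_of_mem_countableBasis hB).measurableSet hμB
  filter_upwards [h_basis] with ω hω U hU hμU
  obtain ⟨x, hxU, hx⟩ := exists_mem_forall_mem_nhdsWithin_pos_measure hμU
  obtain ⟨B, hB, hxB, hBU⟩ := (isBasis_countableBasis α).exists_subset_of_mem_open hxU hU
  have hμB : μ B ≠ 0 :=
    (hx B (mem_nhdsWithin_of_mem_nhds ((isOpen_of_mem_countableBasis hB).mem_nhds hxB))).ne'
  exact (hω B hB hμB).mono fun _ hn ↦ hBU hn

end Sampling

section Marks

theorem ofReal_smul_dirac_add_ofReal_smul_dirac_eq_bernoulliMeasure {α : Type*}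
    [MeasurableSpace α] (x y : α) (p : I) :
    ENNReal.ofReal p • Measure.dirac x + ENNReal.ofReal (1 - p) • Measure.dirac y
      = Ber(x, y, p) := by
  rw [ENNReal.ofReal_eq_coe_nnreal (unitInterval.nonneg p),
    ENNReal.ofReal_eq_coe_nnreal (unitInterval.one_minus_nonneg p)]
  rfl

variable {α : Type*} [MeasurableSpace α] [MeasurableSingletonClass α]

theorem ae_bernoulliMeasure_eq_or_eq (x y : α) (p : I) :
    ∀ᵐ s ∂Ber(x, y, p), s = x ∨ s = y := by
  rw [ae_iff, ← compl_ofPred]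
  exact bernoulliMeasure_apply_of_notMem_of_notMem p
    ((measurableSet_singleton x).union (measurableSet_singleton y)).compl (by simp) (by simp)

theorem bernoulliMeasure_compl_singleton_ne_zero {x y : α} (hxy : x ≠ y) {p : I} (hp0 : 0 < p)
    (hp1 : p < 1) (s : α) : Ber(x, y, p) {s}ᶜ ≠ 0 := by
  classical
  rw [bernoulliMeasure_apply _ (measurableSet_singleton s).compl]
  have hp : 0 < unitInterval.toNNReal p := hp0
  have hσp : 0 < unitInterval.toNNReal (σ p) := (sub_pos.2 hp1 : (0 : ℝ) < 1 - p)
  split_ifs with hx hy hy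
  · exact one_ne_zero
  · exact ENNReal.coe_ne_zero.2 hp.ne'
  · exact ENNReal.coe_ne_zero.2 hσp.ne'
  · exact absurd ((not_not.1 hx).trans (not_not.1 hy).symm) hxy

end Marks

instance isProbabilityMeasure_unif01 : IsProbabilityMeasure unif01 :=
  ⟨by simp [unif01]⟩

instance nullSingletonClass_unif01 : NullSingletonClass unif01 :=
  inferInstanceAs (NullSingletonClass (volume.restrict _))

theorem ae_mem_Ico_of_map_eq_unif01 {Ω : Type*} [MeasurableSpace Ω] {P : Measure Ω} {U : Ω → ℝ}
    (hmeas : AEMeasurable U P) (hlaw : P.map U = unif01) : ∀ᵐ ω ∂P, U ω ∈ Ico (0 : ℝ) 1 := by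
  refine ae_of_ae_map hmeas ?_
  rw [hlaw, unif01, ← restrict_Ico_eq_restrict_Icc]
  exact ae_restrict_mem measurableSet_Ico

section Graph

variable {Ω : Type*} {X : ℕ → Ω → ℝ × ℝ} {V : ℕ × ℕ → Ω → ℝ} {ω : Ω}

theorem Wker_comm (x y : ℝ × ℝ) : Wker x y = Wker y x := by
  unfold Wker
  grind

theorem Wker_eq_of_lt {x y : ℝ × ℝ} (h : x.2 < y.2) : Wker x y = y.1 :=
  if_pos h

theorem kerAdj_comm (a b : ℕ) : kerAdj X V ω a b ↔ kerAdj X V ω b a :=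
  or_comm

theorem kerAdj_iff_of_lt (hV : ∀ q, V q ω ∈ Ico (0 : ℝ) 1)
    {a b : ℕ} (hb : (X b ω).1 = 1 ∨ (X b ω).1 = 0) (hab : (X a ω).2 < (X b ω).2) :
    kerAdj X V ω a b ↔ (X b ω).1 = 1 := by
  have h_kernel (q : ℕ × ℕ) : V q ω < (X b ω).1 ↔ (X b ω).1 = 1 := by
    rcases hb with hb | hb
    · simpa only [hb, iff_true] using (hV q).2
    · simpa only [hb, zero_ne_one, iff_false, not_lt] using (hV q).1
  have hne : a ≠ b := ne_of_apply_ne (fun i ↦ (X i ω).2) hab.ne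
  rw [kerAdj, Wker_comm (X b ω), Wker_eq_of_lt hab, h_kernel, h_kernel, ← or_and_right,
    and_iff_right (lt_or_gt_of_ne hne)]

/-- The closed neighbourhood `N̄(v)` of the vertex `v` in the sample of `G(∞,W)` at `ω`. -/
def kerClosedNbhd (X : ℕ → Ω → ℝ × ℝ) (V : ℕ × ℕ → Ω → ℝ) (ω : Ω) (v : ℕ) : Set ℕ :=
  {u | u = v ∨ kerAdj X V ω u v}

theorem kerClosedNbhd_ne_of_mem_Ioo (hV : ∀ q, V q ω ∈ Ico (0 : ℝ) 1)
    {a b u : ℕ} (hsb : (X b ω).1 = 1 ∨ (X b ω).1 = 0) (hsu : (X u ω).1 = 1 ∨ (X u ω).1 = 0)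
    (hu : (X u ω).2 ∈ Ioo (X a ω).2 (X b ω).2) (hub : (X u ω).1 ≠ (X b ω).1) :
    kerClosedNbhd X V ω a ≠ kerClosedNbhd X V ω b := by
  intro h_eq
  have hua : u ≠ a := ne_of_apply_ne (fun i ↦ (X i ω).2) hu.1.ne'
  have hub' : u ≠ b := ne_of_apply_ne (fun i ↦ (X i ω).2) hu.2.ne
  have h_adj : kerAdj X V ω u a ↔ kerAdj X V ω u b := by
    simpa only [kerClosedNbhd, mem_ofPred_eq, hua, hub', false_or] using Set.ext_iff.1 h_eq u
  rw [kerAdj_comm u a, kerAdj_iff_of_lt hV hsu hu.1, kerAdj_iff_of_lt hV hsb hu.2] at h_adj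
  grind

theorem injective_kerClosedNbhd (hV : ∀ q, V q ω ∈ Ico (0 : ℝ) 1)
    (hs : ∀ i, (X i ω).1 = 1 ∨ (X i ω).1 = 0)
    (hsep : ∀ a b, a ≠ b → (X a ω).2 ≤ (X b ω).2 →
      ∃ u, X u ω ∈ {(X b ω).1}ᶜ ×ˢ Ioo (X a ω).2 (X b ω).2) :
    Function.Injective (kerClosedNbhd X V ω) := by
  have h_ne {a b : ℕ} (hne : a ≠ b) (hab : (X a ω).2 ≤ (X b ω).2) :
      kerClosedNbhd X V ω a ≠ kerClosedNbhd X V ω b := by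
    obtain ⟨u, hub, hu⟩ := hsep a b hne hab
    exact kerClosedNbhd_ne_of_mem_Ioo hV (hs b) (hs u) hu hub
  intro a b h_eq
  by_contra hne
  rcases le_total (X a ω).2 (X b ω).2 with hab | hba
  · exact h_ne hne hab h_eq
  · exact h_ne (Ne.symm hne) hba h_eq.symm

end Graph

theorem stmt16_general {Ω : Type*} [MeasurableSpace Ω] (P : Measure Ω)
    (p : I) (hp0 : 0 < p) (hp1 : p < 1)
    (τ : Measure ℝ) [IsProbabilityMeasure τ] [NullSingletonClass τ]
    (X : ℕ → Ω → ℝ × ℝ) (V : ℕ × ℕ → Ω → ℝ) (hXmeas : ∀ i, Measurable (X i))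
    (hXlaw : ∀ i, P.map (X i) = (Ber(1, 0, p)).prod τ) (hXindep : iIndepFun X P)
    (hV : ∀ q, ∀ᵐ ω ∂P, V q ω ∈ Ico (0 : ℝ) 1) :
    ∀ᵐ ω ∂P, Function.Injective (kerClosedNbhd X V ω) := by
  have : IsProbabilityMeasure P := hXindep.isProbabilityMeasure
  have hX (i : ℕ) : HasLaw (X i) ((Ber(1, 0, p)).prod τ) P :=
    ⟨(hXmeas i).aemeasurable, hXlaw i⟩
  have h_mark : ∀ᵐ ω ∂P, ∀ i, (X i ω).1 = 1 ∨ (X i ω).1 = 0 := ae_all_iff.2 fun i ↦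
    ((measurePreserving_fst.fun_comp_hasLaw (hX i)).ae_iff (by fun_prop)).2
      (ae_bernoulliMeasure_eq_or_eq 1 0 p)
  have h_time (i : ℕ) : HasLaw (fun ω ↦ (X i ω).2) τ P :=
    measurePreserving_snd.fun_comp_hasLaw (hX i)
  have h_gap : ∀ᵐ ω ∂P, ∀ a b, a ≠ b →
      (X a ω).2 ≤ (X b ω).2 → τ (Ioo (X a ω).2 (X b ω).2) ≠ 0 := by
    simp only [ae_all_iff]
    exact fun a b hab ↦ ae_measure_Ioo_ne_zero_of_indepFun (h_time a) (h_time b)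
      ((hXindep.indepFun hab).comp measurable_snd measurable_snd)
  filter_upwards [ae_all_iff.2 hV, h_mark, h_gap,
    ae_forall_isOpen_frequently_mem_of_iIndepFun hXmeas hXlaw hXindep] with ω hVω hs hgap hdense
  refine injective_kerClosedNbhd hVω hs fun a b hne hab ↦
    (hdense _ (isOpen_compl_singleton.prod isOpen_Ioo) ?_).exists
  rw [Measure.prod_prod]
  exact mul_ne_zero (bernoulliMeasure_compl_singleton_ne_zero one_ne_zero hp0 hp1 _)
    (hgap a b hne hab)

/-- Let `0 < p < 1`, `ν = p δ₁ + (1−p) δ₀`, `μ_ν = ν × λ` on `[0,1]²`,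
and let `G(∞,W)` be built from `X₁,X₂,…` i.i.d. `μ_ν` and `(V_{ij})_{i<j}` i.i.d.
`Uniform[0,1]`, all independent, with edge `{i,j}` iff `V_{ij} < W(X_i,X_j)`. Then almost
surely no two distinct vertices of `G(∞,W)` have equal closed neighbourhoods. -/
theorem stmt16 {Ω : Type*} [MeasurableSpace Ω] (P : Measure Ω) [IsProbabilityMeasure P]
    (p : ℝ) (hp0 : 0 < p) (hp1 : p < 1)
    (X : ℕ → Ω → ℝ × ℝ) (V : ℕ × ℕ → Ω → ℝ)
    (hXmeas : ∀ i, Measurable (X i)) (hVmeas : ∀ q, Measurable (V q))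
    (hXlaw : ∀ i, Measure.map (X i) P
      = (ENNReal.ofReal p • Measure.dirac (1 : ℝ)
          + ENNReal.ofReal (1 - p) • Measure.dirac 0).prod unif01)
    (hVlaw : ∀ q, Measure.map (V q) P = unif01)
    (hindep : iIndepFun (m := fun s => (inferInstance : MeasurableSpace (mixType s)))
      (mixFam X V) P) :
    ∀ᵐ ω ∂P, ∀ a b : ℕ, a ≠ b →
      ¬ (∀ u : ℕ, (u = a ∨ kerAdj X V ω u a) ↔ (u = b ∨ kerAdj X V ω u b)) := by
  filter_upwards [stmt16_general P ⟨p, hp0.le, hp1.le⟩ hp0 hp1 unif01 X V hXmeas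
    (fun i ↦ ofReal_smul_dirac_add_ofReal_smul_dirac_eq_bernoulliMeasure (1 : ℝ) 0 _ ▸ hXlaw i)
    (hindep.precomp (g := Sum.inl) Sum.inl_injective)
    fun q ↦ ae_mem_Ico_of_map_eq_unif01 (hVmeas q).aemeasurable (hVlaw q)] with ω h_inj a b hab h_eq
  exact hab (h_inj (Set.ext h_eq))
end
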